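/- arXiv:1805.09114 — 7 statements merged into one kernel-verified Lean document; each statement's English description precedes it below -/
import Mathlib

section
/- (Interpolation, α → 0.) Let h ∈ Σ_n, g ∈ Σ_m, M ∈ ℝ^{n×m} a matrix with nonnegative entries, C₁ ∈ ℝ^{n×n}, C₂ ∈ ℝ^{m×m} and q ≥ 1. Define for each α ∈ [0,1] the value FGW_{q,α} = min_{π ∈ Π(h,g)} E_q(M,C₁,C₂,π). Then the limit of FGW_{q,α} as α → 0 equals the Wasserstein value W_q^q = min_{π ∈ Π(h,g)} H_q(M,π). -/
open Finset

/-- `h` is a positive histogram (element of the open simplex Σₙ). -/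
def IsSimplex {n : ℕ} (h : Fin n → ℝ) : Prop :=
  (∀ i, 0 < h i) ∧ ∑ i, h i = 1

/-- The set `Π(h,g)` of admissible couplings between histograms `h` and `g`. -/
def Couplings {n m : ℕ} (h : Fin n → ℝ) (g : Fin m → ℝ) :
    Set (Matrix (Fin n) (Fin m) ℝ) :=
  {π | (∀ i j, 0 ≤ π i j) ∧ (∀ i, ∑ j, π i j = h i) ∧ (∀ j, ∑ i, π i j = g j)}

/-- Wasserstein loss `H_q(M, π) = Σ_{i,j} M_{ij}^q π_{ij}`. -/
noncomputable def Hloss {n m : ℕ} (q : ℝ) (M π : Matrix (Fin n) (Fin m) ℝ) : ℝ :=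
  ∑ i, ∑ j, M i j ^ q * π i j

/-- Gromov–Wasserstein loss `J_q(C₁, C₂, π) = Σ_{i,j,k,l} |C₁(i,k)-C₂(j,l)|^q π_{ij} π_{kl}`. -/
noncomputable def Jloss {n m : ℕ} (q : ℝ) (C1 : Matrix (Fin n) (Fin n) ℝ)
    (C2 : Matrix (Fin m) (Fin m) ℝ) (π : Matrix (Fin n) (Fin m) ℝ) : ℝ :=
  ∑ i, ∑ j, ∑ k, ∑ l, |C1 i k - C2 j l| ^ q * π i j * π k l

/-- FGW loss `E_q = (1-α) H_q + α J_q`. -/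
noncomputable def Eloss {n m : ℕ} (q α : ℝ) (M : Matrix (Fin n) (Fin m) ℝ)
    (C1 : Matrix (Fin n) (Fin n) ℝ) (C2 : Matrix (Fin m) (Fin m) ℝ)
    (π : Matrix (Fin n) (Fin m) ℝ) : ℝ :=
  (1 - α) * Hloss q M π + α * Jloss q C1 C2 π

open Filter Topology

/-- interpolation, `α → 0`: the FGW value tends to the Wasserstein
value `W_q^q` as the trade-off parameter `α ∈ [0,1]` tends to `0`. -/
theorem fgw_tendsto_wasserstein {n m : ℕ} (hn : 1 ≤ n) (hm : 1 ≤ m)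
    (h : Fin n → ℝ) (g : Fin m → ℝ) (hh : IsSimplex h) (hg : IsSimplex g)
    (M : Matrix (Fin n) (Fin m) ℝ) (hM : ∀ i j, 0 ≤ M i j)
    (C1 : Matrix (Fin n) (Fin n) ℝ) (C2 : Matrix (Fin m) (Fin m) ℝ)
    (q : ℝ) (hq : 1 ≤ q) :
    Tendsto (fun α : ℝ => sInf (Eloss q α M C1 C2 '' Couplings h g))
      (𝓝[Set.Icc (0 : ℝ) 1] 0)
      (𝓝 (sInf (Hloss q M '' Couplings h g))) := by
  have hHnn : ∀ π ∈ Couplings h g, 0 ≤ Hloss q M π := fun π hπ =>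
    Finset.sum_nonneg fun i _ => Finset.sum_nonneg fun j _ =>
      mul_nonneg (Real.rpow_nonneg (hM i j) q) (hπ.1 i j)
  have hJnn : ∀ π ∈ Couplings h g, 0 ≤ Jloss q C1 C2 π := fun π hπ =>
    Finset.sum_nonneg fun i _ => Finset.sum_nonneg fun j _ =>
      Finset.sum_nonneg fun k _ => Finset.sum_nonneg fun l _ =>
        mul_nonneg (mul_nonneg (Real.rpow_nonneg (abs_nonneg _) q) (hπ.1 i j)) (hπ.1 k l)
  have hne : (Couplings h g).Nonempty := by
    refine ⟨fun i j => h i * g j, fun i j => (mul_pos (hh.1 i) (hg.1 j)).le, fun i => ?_,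
      fun j => ?_⟩
    · rw [← Finset.mul_sum, hg.2, mul_one]
    · rw [← Finset.sum_mul, hh.2, one_mul]
  have hbH : BddBelow (Hloss q M '' Couplings h g) := by
    refine ⟨0, ?_⟩
    rintro _ ⟨π, hπ, rfl⟩
    exact hHnn π hπ
  have hmem : ∀ᶠ α in 𝓝[Set.Icc (0 : ℝ) 1] 0, α ∈ Set.Icc (0 : ℝ) 1 := self_mem_nhdsWithin
  rw [tendsto_order]
  constructor
  · intro a ha
    have hc : Tendsto (fun α : ℝ => (1 - α) * sInf (Hloss q M '' Couplings h g))
        (𝓝[Set.Icc (0 : ℝ) 1] 0) (𝓝 (sInf (Hloss q M '' Couplings h g))) := by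
      have : Continuous (fun α : ℝ => (1 - α) * sInf (Hloss q M '' Couplings h g)) := by
        fun_prop
      have h2 := this.tendsto 0
      simp only [sub_zero, one_mul] at h2
      exact h2.mono_left nhdsWithin_le_nhds
    filter_upwards [hmem, hc.eventually_const_lt ha] with α hα hlt
    refine hlt.trans_le (le_csInf (hne.image _) ?_)
    rintro _ ⟨π, hπ, rfl⟩
    have h1 := mul_le_mul_of_nonneg_left (csInf_le hbH ⟨π, hπ, rfl⟩) (sub_nonneg.2 hα.2)
    have h2 := mul_nonneg hα.1 (hJnn π hπ)
    unfold Eloss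
    linarith
  · intro b hb
    obtain ⟨_, ⟨π, hπ, rfl⟩, hlt⟩ := exists_lt_of_csInf_lt (hne.image _) hb
    have hc : Tendsto (fun α : ℝ => Eloss q α M C1 C2 π)
        (𝓝[Set.Icc (0 : ℝ) 1] 0) (𝓝 (Hloss q M π)) := by
      have : Continuous (fun α : ℝ => Eloss q α M C1 C2 π) := by
        unfold Eloss
        fun_prop
      have h2 := this.tendsto 0
      have h3 : Eloss q 0 M C1 C2 π = Hloss q M π := by simp [Eloss]
      rw [h3] at h2
      exact h2.mono_left nhdsWithin_le_nhds
    filter_upwards [hmem, hc.eventually_lt_const hlt] with α hα hl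
    refine lt_of_le_of_lt (csInf_le ?_ ⟨π, hπ, rfl⟩) hl
    refine ⟨0, ?_⟩
    rintro _ ⟨ρ, hρ, rfl⟩
    exact add_nonneg (mul_nonneg (sub_nonneg.2 hα.2) (hHnn ρ hρ))
      (mul_nonneg hα.1 (hJnn ρ hρ))
end

section
/- (Interpolation, α → 1.) Let h ∈ Σ_n, g ∈ Σ_m, M ∈ ℝ^{n×m} a matrix with nonnegative entries, C₁ ∈ ℝ^{n×n}, C₂ ∈ ℝ^{m×m} and q ≥ 1. Define for each α ∈ [0,1] the value FGW_{q,α} = min_{π ∈ Π(h,g)} E_q(M,C₁,C₂,π). Then the limit of FGW_{q,α} as α → 1 equals the Gromov-Wasserstein value GW_q^q = min_{π ∈ Π(h,g)} J_q(C₁,C₂,π). -/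
open Finset

open Filter Topology

/-- interpolation, `α → 1`: the FGW value tends to the
Gromov–Wasserstein value `GW_q^q` as the trade-off parameter `α ∈ [0,1]` tends to `1`. -/
theorem fgw_tendsto_gromov {n m : ℕ} (hn : 1 ≤ n) (hm : 1 ≤ m)
    (h : Fin n → ℝ) (g : Fin m → ℝ) (hh : IsSimplex h) (hg : IsSimplex g)
    (M : Matrix (Fin n) (Fin m) ℝ) (hM : ∀ i j, 0 ≤ M i j)
    (C1 : Matrix (Fin n) (Fin n) ℝ) (C2 : Matrix (Fin m) (Fin m) ℝ)
    (q : ℝ) (hq : 1 ≤ q) :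
    Tendsto (fun α : ℝ => sInf (Eloss q α M C1 C2 '' Couplings h g))
      (𝓝[Set.Icc (0 : ℝ) 1] 1)
      (𝓝 (sInf (Jloss q C1 C2 '' Couplings h g))) := by
  have hne : (Couplings h g).Nonempty := by
    refine ⟨fun i j => h i * g j, fun i j => mul_nonneg (hh.1 i).le (hg.1 j).le, fun i => ?_,
      fun j => ?_⟩
    · rw [← Finset.mul_sum, hg.2, mul_one]
    · rw [← Finset.sum_mul, hh.2, one_mul]
  have hH0 : ∀ π ∈ Couplings h g, 0 ≤ Hloss q M π := fun π hπ =>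
    Finset.sum_nonneg fun i _ => Finset.sum_nonneg fun j _ =>
      mul_nonneg (Real.rpow_nonneg (hM i j) q) (hπ.1 i j)
  have hJ0 : ∀ π ∈ Couplings h g, 0 ≤ Jloss q C1 C2 π := fun π hπ =>
    Finset.sum_nonneg fun i _ => Finset.sum_nonneg fun j _ =>
      Finset.sum_nonneg fun k _ => Finset.sum_nonneg fun l _ =>
        mul_nonneg (mul_nonneg (Real.rpow_nonneg (abs_nonneg _) q) (hπ.1 i j)) (hπ.1 k l)
  obtain ⟨B, hB⟩ : ∃ B, ∀ π ∈ Couplings h g, Hloss q M π ≤ B := by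
    refine ⟨∑ i, ∑ j, M i j ^ q * h i, fun π hπ => ?_⟩
    refine Finset.sum_le_sum fun i _ => Finset.sum_le_sum fun j _ => ?_
    refine mul_le_mul_of_nonneg_left ?_ (Real.rpow_nonneg (hM i j) q)
    rw [← hπ.2.1 i]
    exact Finset.single_le_sum (f := fun j => π i j) (fun j _ => hπ.1 i j) (Finset.mem_univ j)
  have hJb : BddBelow (Jloss q C1 C2 '' Couplings h g) := by
    refine ⟨0, ?_⟩
    rintro _ ⟨π, hπ, rfl⟩
    exact hJ0 π hπ
  have hlow : Tendsto (fun α : ℝ => α * sInf (Jloss q C1 C2 '' Couplings h g))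
      (𝓝[Set.Icc (0 : ℝ) 1] 1) (𝓝 (sInf (Jloss q C1 C2 '' Couplings h g))) := by
    have hc : Continuous (fun α : ℝ => α * sInf (Jloss q C1 C2 '' Couplings h g)) := by fun_prop
    have := (hc.tendsto 1).mono_left (nhdsWithin_le_nhds (s := Set.Icc (0 : ℝ) 1))
    simpa using this
  have hup : Tendsto (fun α : ℝ => sInf (Jloss q C1 C2 '' Couplings h g) + (1 - α) * B)
      (𝓝[Set.Icc (0 : ℝ) 1] 1) (𝓝 (sInf (Jloss q C1 C2 '' Couplings h g))) := by
    have hc : Continuous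
        (fun α : ℝ => sInf (Jloss q C1 C2 '' Couplings h g) + (1 - α) * B) := by fun_prop
    have := (hc.tendsto 1).mono_left (nhdsWithin_le_nhds (s := Set.Icc (0 : ℝ) 1))
    simpa using this
  refine tendsto_of_tendsto_of_tendsto_of_le_of_le' hlow hup ?_ ?_
  · filter_upwards [self_mem_nhdsWithin] with α hα
    refine le_csInf (hne.image _) ?_
    rintro _ ⟨π, hπ, rfl⟩
    have h1 := csInf_le hJb (Set.mem_image_of_mem _ hπ)
    have h2 := mul_le_mul_of_nonneg_left h1 hα.1
    have h3 := mul_nonneg (sub_nonneg.2 hα.2) (hH0 π hπ)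
    unfold Eloss
    linarith
  · filter_upwards [self_mem_nhdsWithin] with α hα
    rw [← sub_le_iff_le_add]
    refine le_csInf (hne.image _) ?_
    rintro _ ⟨π, hπ, rfl⟩
    have hEb : BddBelow (Eloss q α M C1 C2 '' Couplings h g) := by
      refine ⟨0, ?_⟩
      rintro _ ⟨ρ, hρ, rfl⟩
      exact add_nonneg (mul_nonneg (sub_nonneg.2 hα.2) (hH0 ρ hρ)) (mul_nonneg hα.1 (hJ0 ρ hρ))
    have h1 := csInf_le hEb (Set.mem_image_of_mem _ hπ)
    have h2 := mul_le_mul_of_nonneg_left (hB π hπ) (sub_nonneg.2 hα.2)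
    have h3 := mul_le_of_le_one_left (hJ0 π hπ) hα.2
    have h4 : Eloss q α M C1 C2 π = (1 - α) * Hloss q M π + α * Jloss q C1 C2 π := rfl
    linarith
end

section
/- (Vanishing of FGW: necessity.) Let (Ω_f, d) be a metric space, q ≥ 1 and α ∈ (0,1). Let h ∈ Σ_n, g ∈ Σ_m, features a₁,…,a_n ∈ Ω_f and b₁,…,b_m ∈ Ω_f, and symmetric matrices C₁ ∈ ℝ^{n×n}, C₂ ∈ ℝ^{m×m} that are distance matrices (entries nonnegative, zero diagonal, satisfying the triangle inequality C(i,k) ≤ C(i,l) + C(l,k)). Assume the points are distinct in the product sense: (C₁(i,·), a_i) ≠ (C₁(j,·), a_j) for i ≠ j, and similarly for the second space. Set M_{ij} = d(a_i, b_j). If FGW_{q,α} = min_{π ∈ Π(h,g)} E_q(M,C₁,C₂,π) = 0, then n = m and there exists a bijection σ : {1,…,n} → {1,…,n} such that h_i = g_{σ(i)} for all i, a_i = b_{σ(i)} for all i, and C₁(i,k) = C₂(σ(i),σ(k)) for all i,k. -/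
open Finset

theorem fgw_aux_compact {n m : ℕ} (h : Fin n → ℝ) (g : Fin m → ℝ) :
    IsCompact (Couplings h g) := by
  have hsub : Couplings h g ⊆
      Set.pi Set.univ (fun i => Set.pi Set.univ (fun _ : Fin m => Set.Icc 0 (h i))) := by
    rintro π ⟨h0, h1, _⟩ i _ j _
    refine ⟨h0 i j, ?_⟩
    rw [← h1 i]
    exact Finset.single_le_sum (f := fun j => π i j) (fun j _ => h0 i j) (Finset.mem_univ j)
  refine IsCompact.of_isClosed_subset
    (isCompact_univ_pi fun i => isCompact_univ_pi fun _ => isCompact_Icc) ?_ hsub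
  have e : ∀ i j, Continuous (fun π : Matrix (Fin n) (Fin m) ℝ => π i j) := fun i j =>
    (continuous_apply j).comp (continuous_apply i)
  simp only [Couplings, Set.setOf_and, Set.setOf_forall]
  refine IsClosed.inter ?_ (IsClosed.inter ?_ ?_)
  · exact isClosed_iInter fun i => isClosed_iInter fun j =>
      isClosed_le continuous_const (e i j)
  · exact isClosed_iInter fun i =>
      isClosed_eq (continuous_finsetSum _ fun j _ => e i j) continuous_const
  · exact isClosed_iInter fun j =>
      isClosed_eq (continuous_finsetSum _ fun i _ => e i j) continuous_const

theorem fgw_aux_cont {n m : ℕ} (q α : ℝ) (M : Matrix (Fin n) (Fin m) ℝ)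
    (C1 : Matrix (Fin n) (Fin n) ℝ) (C2 : Matrix (Fin m) (Fin m) ℝ) :
    Continuous (Eloss q α M C1 C2) := by
  have e : ∀ i j, Continuous (fun π : Matrix (Fin n) (Fin m) ℝ => π i j) := fun i j =>
    (continuous_apply j).comp (continuous_apply i)
  unfold Eloss Hloss Jloss
  refine (continuous_const.mul ?_).add (continuous_const.mul ?_)
  · exact continuous_finsetSum _ fun i _ => continuous_finsetSum _ fun j _ =>
      continuous_const.mul (e i j)
  · exact continuous_finsetSum _ fun i _ => continuous_finsetSum _ fun j _ =>
      continuous_finsetSum _ fun k _ => continuous_finsetSum _ fun l _ =>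
      (continuous_const.mul (e i j)).mul (e k l)

theorem fgw_aux_rpow {x q : ℝ} (hx : 0 ≤ x) (hq : 1 ≤ q) (h : x ^ q = 0) : x = 0 :=
  ((Real.rpow_eq_zero hx (by linarith)).1 h)

/-- vanishing of FGW: necessity: if the FGW value is zero,
the two structured data are isomorphic via a weight-, feature- and
structure-preserving bijection (in particular `n = m`). -/
theorem fgw_eq_zero_implies_isomorphism {Ωf : Type*} [MetricSpace Ωf] {n m : ℕ}
    (q α : ℝ) (hq : 1 ≤ q) (hα : α ∈ Set.Ioo (0 : ℝ) 1)
    (h : Fin n → ℝ) (g : Fin m → ℝ) (hh : IsSimplex h) (hg : IsSimplex g)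
    (a : Fin n → Ωf) (b : Fin m → Ωf)
    (C1 : Matrix (Fin n) (Fin n) ℝ) (C2 : Matrix (Fin m) (Fin m) ℝ)
    -- `C₁` is a (symmetric) distance matrix
    (hC1sym : ∀ i k, C1 i k = C1 k i)
    (hC1nonneg : ∀ i k, 0 ≤ C1 i k)
    (hC1diag : ∀ i, C1 i i = 0)
    (hC1tri : ∀ i k l, C1 i k ≤ C1 i l + C1 l k)
    -- `C₂` is a (symmetric) distance matrix
    (hC2sym : ∀ j l, C2 j l = C2 l j)
    (hC2nonneg : ∀ j l, 0 ≤ C2 j l)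
    (hC2diag : ∀ j, C2 j j = 0)
    (hC2tri : ∀ j l p, C2 j l ≤ C2 j p + C2 p l)
    -- the support points are pairwise distinct in the product sense
    (hdist1 : ∀ i j, i ≠ j → ¬ ((∀ k, C1 i k = C1 j k) ∧ a i = a j))
    (hdist2 : ∀ i j, i ≠ j → ¬ ((∀ l, C2 i l = C2 j l) ∧ b i = b j))
    (hzero : sInf (Eloss q α (fun i j => dist (a i) (b j)) C1 C2 '' Couplings h g) = 0) :
    n = m ∧ ∃ σ : Fin n ≃ Fin m,
      (∀ i, h i = g (σ i)) ∧
      (∀ i, a i = b (σ i)) ∧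
      (∀ i k, C1 i k = C2 (σ i) (σ k)) := by
  have hne : (Couplings h g).Nonempty := by
    refine ⟨fun i j => h i * g j, fun i j => (mul_pos (hh.1 i) (hg.1 j)).le, fun i => ?_,
      fun j => ?_⟩
    · rw [← Finset.mul_sum, hg.2, mul_one]
    · rw [← Finset.sum_mul, hh.2, one_mul]
  obtain ⟨π, hπ, hE⟩ := ((fgw_aux_compact h g).image
    (fgw_aux_cont q α (fun i j => dist (a i) (b j)) C1 C2)).sInf_mem (hne.image _)
  rw [hzero] at hE
  obtain ⟨h0, h1, h2⟩ := hπ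
  have tH : ∀ i j, 0 ≤ dist (a i) (b j) ^ q * π i j := fun i j =>
    mul_nonneg (Real.rpow_nonneg dist_nonneg _) (h0 i j)
  have tJ : ∀ i j k l, 0 ≤ |C1 i k - C2 j l| ^ q * π i j * π k l := fun i j k l =>
    mul_nonneg (mul_nonneg (Real.rpow_nonneg (abs_nonneg _) _) (h0 i j)) (h0 k l)
  have hH0 : 0 ≤ Hloss q (fun i j => dist (a i) (b j)) π :=
    Finset.sum_nonneg fun i _ => Finset.sum_nonneg fun j _ => tH i j
  have hJ0 : 0 ≤ Jloss q C1 C2 π :=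
    Finset.sum_nonneg fun i _ => Finset.sum_nonneg fun j _ =>
      Finset.sum_nonneg fun k _ => Finset.sum_nonneg fun l _ => tJ i j k l
  unfold Eloss at hE
  have hA := mul_nonneg (sub_pos.2 hα.2).le hH0
  have hB := mul_nonneg hα.1.le hJ0
  have hH : Hloss q (fun i j => dist (a i) (b j)) π = 0 :=
    (mul_eq_zero.1 (by linarith : (1 - α) * Hloss q (fun i j => dist (a i) (b j)) π = 0)).resolve_left
      (sub_pos.2 hα.2).ne'
  have hJ : Jloss q C1 C2 π = 0 :=
    (mul_eq_zero.1 (by linarith : α * Jloss q C1 C2 π = 0)).resolve_left hα.1.ne'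
  have kH : ∀ i j, 0 < π i j → a i = b j := by
    intro i j hp
    have s1 := (Finset.sum_eq_zero_iff_of_nonneg
      (fun i _ => Finset.sum_nonneg fun j _ => tH i j)).1 hH i (Finset.mem_univ _)
    have s2 := (Finset.sum_eq_zero_iff_of_nonneg
      (fun j _ => tH i j)).1 s1 j (Finset.mem_univ _)
    exact dist_eq_zero.1 (fgw_aux_rpow dist_nonneg hq ((mul_eq_zero.1 s2).resolve_right hp.ne'))
  have kJ : ∀ i j k l, 0 < π i j → 0 < π k l → C1 i k = C2 j l := by
    intro i j k l hp hp2
    have s1 := (Finset.sum_eq_zero_iff_of_nonneg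
      (fun i _ => Finset.sum_nonneg fun j _ => Finset.sum_nonneg fun k _ =>
        Finset.sum_nonneg fun l _ => tJ i j k l)).1 hJ i (Finset.mem_univ _)
    have s2 := (Finset.sum_eq_zero_iff_of_nonneg
      (fun j _ => Finset.sum_nonneg fun k _ =>
        Finset.sum_nonneg fun l _ => tJ i j k l)).1 s1 j (Finset.mem_univ _)
    have s3 := (Finset.sum_eq_zero_iff_of_nonneg
      (fun k _ => Finset.sum_nonneg fun l _ => tJ i j k l)).1 s2 k (Finset.mem_univ _)
    have s4 := (Finset.sum_eq_zero_iff_of_nonneg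
      (fun l _ => tJ i j k l)).1 s3 l (Finset.mem_univ _)
    have s5 := (mul_eq_zero.1 ((mul_eq_zero.1 s4).resolve_right hp2.ne')).resolve_right hp.ne'
    exact sub_eq_zero.1 (abs_eq_zero.1 (fgw_aux_rpow (abs_nonneg _) hq s5))
  have er : ∀ i, ∃ j, 0 < π i j := by
    intro i
    by_contra! hc
    have := hh.1 i
    rw [← h1 i] at this
    exact absurd (Finset.sum_nonpos fun j _ => hc j) (not_le.2 this)
  have ec : ∀ j, ∃ i, 0 < π i j := by
    intro j
    by_contra! hc
    have := hg.1 j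
    rw [← h2 j] at this
    exact absurd (Finset.sum_nonpos fun i _ => hc i) (not_le.2 this)
  have ur : ∀ i j j', 0 < π i j → 0 < π i j' → j = j' := by
    intro i j j' p p'
    by_contra hc
    refine hdist2 j j' hc ⟨fun l => ?_, (kH i j p).symm.trans (kH i j' p')⟩
    obtain ⟨k, hk⟩ := ec l
    exact (kJ i j k l p hk).symm.trans (kJ i j' k l p' hk)
  have uc : ∀ i i' j, 0 < π i j → 0 < π i' j → i = i' := by
    intro i i' j p p'
    by_contra hc
    refine hdist1 i i' hc ⟨fun k => ?_, (kH i j p).trans (kH i' j p').symm⟩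
    obtain ⟨l, hl⟩ := er k
    exact (kJ i j k l p hl).trans (kJ i' j k l p' hl).symm
  choose f hf using er
  choose f' hf' using ec
  let σ : Fin n ≃ Fin m := ⟨f, f', fun i => uc _ _ (f i) (hf' _) (hf i),
    fun j => ur (f' j) _ _ (hf _) (hf' j)⟩
  refine ⟨by simpa using Fintype.card_congr σ, σ, fun i => ?_, fun i => kH _ _ (hf i),
    fun i k => kJ _ _ _ _ (hf i) (hf k)⟩
  change h i = g (f i)
  rw [← h1 i, ← h2 (f i), Finset.sum_eq_single (f i), Finset.sum_eq_single i]
  · intro i' _ hi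
    by_contra hc
    exact hi (uc _ _ _ (lt_of_le_of_ne (h0 _ _) (Ne.symm hc)) (hf i))
  · simp
  · intro j _ hj
    by_contra hc
    exact hj (ur _ _ _ (lt_of_le_of_ne (h0 _ _) (Ne.symm hc)) (hf i))
  · simp
end

section
/- (Triangle inequality for q = 1.) Let (Ω_f, d) be a metric space and α ∈ [0,1]. Let h ∈ Σ_n, g ∈ Σ_m, f ∈ Σ_k be positive histograms with associated features a₁,…,a_n, b₁,…,b_m, c₁,…,c_k ∈ Ω_f and matrices C₁ ∈ ℝ^{n×n}, C₂ ∈ ℝ^{m×m}, C₃ ∈ ℝ^{k×k}. Write FGW(μ,ν) = min_{π ∈ Π(h,g)} Σ_{i,j,k',l} ((1−α)·d(a_i,b_j) + α·|C₁(i,k')−C₂(j,l)|)·π_{ij}·π_{k'l}, and define FGW(ν,γ) and FGW(μ,γ) analogously with the corresponding features, structure matrices and histograms. Then FGW(μ,γ) ≤ FGW(μ,ν) + FGW(ν,γ). -/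
open Finset

/-- The FGW value (for `q = 1`) between two structured data given by features,
structure matrices and histograms. -/
noncomputable def FGW1 {Ωf : Type*} [MetricSpace Ωf] (α : ℝ) {n m : ℕ}
    (a : Fin n → Ωf) (b : Fin m → Ωf)
    (C1 : Matrix (Fin n) (Fin n) ℝ) (C2 : Matrix (Fin m) (Fin m) ℝ)
    (h : Fin n → ℝ) (g : Fin m → ℝ) : ℝ :=
  sInf ((fun π : Matrix (Fin n) (Fin m) ℝ =>
    ∑ i, ∑ j, ∑ k', ∑ l,
      ((1 - α) * dist (a i) (b j) + α * |C1 i k' - C2 j l|) * π i j * π k' l) ''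
    Couplings h g)

lemma coupling_nonempty {n m : ℕ} (h : Fin n → ℝ) (g : Fin m → ℝ)
    (hh : IsSimplex h) (hg : IsSimplex g) : (Couplings h g).Nonempty := by
  refine ⟨fun i j => h i * g j, fun i j => (mul_pos (hh.1 i) (hg.1 j)).le, fun i => ?_, fun j => ?_⟩
  · rw [← Finset.mul_sum, hg.2, mul_one]
  · rw [← Finset.sum_mul, hh.2, one_mul]

lemma cost_reindex {n m : ℕ} (L : Fin n → Fin m → Fin n → Fin m → ℝ)
    (S : Fin n → Fin m → ℝ) :
    ∑ i, ∑ j, ∑ k', ∑ l, L i j k' l * S i j * S k' l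
      = ∑ i, ∑ j, (∑ k', ∑ l, L i j k' l * S k' l) * S i j := by
  simp only [Finset.sum_mul]
  refine Finset.sum_congr rfl fun i _ => Finset.sum_congr rfl fun j _ =>
    Finset.sum_congr rfl fun k' _ => Finset.sum_congr rfl fun l _ => ?_
  ring

lemma marg13 {n m k : ℕ} (T : Fin n → Fin m → Fin k → ℝ) (φ : Fin n → Fin k → ℝ) :
    ∑ i, ∑ e, φ i e * (∑ j, T i j e) = ∑ i, ∑ j, ∑ e, φ i e * T i j e := by
  refine Finset.sum_congr rfl fun i _ => ?_
  rw [Finset.sum_comm]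
  simp only [Finset.mul_sum]

lemma marg12 {n m k : ℕ} (T : Fin n → Fin m → Fin k → ℝ) (φ : Fin n → Fin m → ℝ) :
    ∑ i, ∑ j, φ i j * (∑ e, T i j e) = ∑ i, ∑ j, ∑ e, φ i j * T i j e := by
  simp only [Finset.mul_sum]

lemma marg23 {n m k : ℕ} (T : Fin n → Fin m → Fin k → ℝ) (φ : Fin m → Fin k → ℝ) :
    ∑ j, ∑ e, φ j e * (∑ i, T i j e) = ∑ i, ∑ j, ∑ e, φ j e * T i j e := by
  simp only [Finset.mul_sum]
  rw [Finset.sum_comm]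
  conv_rhs => rw [Finset.sum_comm]
  rw [Finset.sum_comm]
  refine Finset.sum_congr rfl fun j _ => ?_
  rw [Finset.sum_comm]

lemma glue_cost {n m k : ℕ} (T : Fin n → Fin m → Fin k → ℝ) (hT : ∀ i j e, 0 ≤ T i j e)
    (L : Fin n → Fin k → Fin n → Fin k → ℝ) (L1 : Fin n → Fin m → Fin n → Fin m → ℝ)
    (L2 : Fin m → Fin k → Fin m → Fin k → ℝ)
    (hL : ∀ i j e i' j' e', L i e i' e' ≤ L1 i j i' j' + L2 j e j' e')
    (S : Fin n → Fin k → ℝ) (P : Fin n → Fin m → ℝ) (Q : Fin m → Fin k → ℝ)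
    (hS : ∀ i e, S i e = ∑ j, T i j e) (hP : ∀ i j, P i j = ∑ e, T i j e)
    (hQ : ∀ j e, Q j e = ∑ i, T i j e) :
    ∑ i, ∑ j, ∑ k', ∑ l, L i j k' l * S i j * S k' l
      ≤ (∑ i, ∑ j, ∑ k', ∑ l, L1 i j k' l * P i j * P k' l)
       + ∑ i, ∑ j, ∑ k', ∑ l, L2 i j k' l * Q i j * Q k' l := by
  rw [cost_reindex L S, cost_reindex L1 P, cost_reindex L2 Q]
  have m1 : ∀ φ : Fin n → Fin k → ℝ, ∑ i, ∑ e, φ i e * S i e = ∑ i, ∑ j, ∑ e, φ i e * T i j e :=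
    fun φ => by rw [← marg13]; simp only [hS]
  have m2 : ∀ φ : Fin n → Fin m → ℝ, ∑ i, ∑ e, φ i e * P i e = ∑ i, ∑ j, ∑ e, φ i j * T i j e :=
    fun φ => by rw [← marg12]; simp only [hP]
  have m3 : ∀ φ : Fin m → Fin k → ℝ, ∑ i, ∑ e, φ i e * Q i e = ∑ i, ∑ j, ∑ e, φ j e * T i j e :=
    fun φ => by rw [← marg23]; simp only [hQ]
  rw [m1 (fun i j => ∑ k', ∑ l, L i j k' l * S k' l),
    m2 (fun i j => ∑ k', ∑ l, L1 i j k' l * P k' l),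
    m3 (fun i j => ∑ k', ∑ l, L2 i j k' l * Q k' l)]
  simp only [← Finset.sum_add_distrib, ← add_mul]
  refine Finset.sum_le_sum fun i _ => Finset.sum_le_sum fun j _ => Finset.sum_le_sum fun e _ =>
    mul_le_mul_of_nonneg_right ?_ (hT i j e)
  rw [m1 (L i e), m2 (L1 i j), m3 (L2 j e)]
  simp only [← Finset.sum_add_distrib, ← add_mul]
  refine Finset.sum_le_sum fun i' _ => Finset.sum_le_sum fun j' _ => Finset.sum_le_sum fun e' _ =>
    mul_le_mul_of_nonneg_right (hL ..) (hT ..)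

/-- triangle inequality for `q = 1`:
`FGW(μ,γ) ≤ FGW(μ,ν) + FGW(ν,γ)`. -/
theorem fgw_triangle_inequality {Ωf : Type*} [MetricSpace Ωf] {n m k : ℕ}
    (α : ℝ) (hα : α ∈ Set.Icc (0 : ℝ) 1)
    (h : Fin n → ℝ) (g : Fin m → ℝ) (f : Fin k → ℝ)
    (hh : IsSimplex h) (hg : IsSimplex g) (hf : IsSimplex f)
    (a : Fin n → Ωf) (b : Fin m → Ωf) (c : Fin k → Ωf)
    (C1 : Matrix (Fin n) (Fin n) ℝ) (C2 : Matrix (Fin m) (Fin m) ℝ)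
    (C3 : Matrix (Fin k) (Fin k) ℝ) :
    FGW1 α a c C1 C3 h f ≤ FGW1 α a b C1 C2 h g + FGW1 α b c C2 C3 g f := by
  obtain ⟨h0, h1⟩ := hα
  have h1' : 0 ≤ 1 - α := by linarith
  unfold FGW1
  rw [← sub_le_iff_le_add']
  refine le_csInf ((coupling_nonempty g f hg hf).image _) ?_
  rintro _ ⟨Q, ⟨hQ0, hQ1, hQ2⟩, rfl⟩
  rw [sub_le_comm]
  refine le_csInf ((coupling_nonempty h g hh hg).image _) ?_
  rintro _ ⟨P, ⟨hP0, hP1, hP2⟩, rfl⟩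
  rw [sub_le_iff_le_add]
  have hg0 : ∀ j, g j ≠ 0 := fun j => (hg.1 j).ne'
  let T : Fin n → Fin m → Fin k → ℝ := fun i j e => P i j * Q j e / g j
  have hT : ∀ i j e, 0 ≤ T i j e := fun i j e =>
    div_nonneg (mul_nonneg (hP0 i j) (hQ0 j e)) (hg.1 j).le
  have hPT : ∀ i j, P i j = ∑ e, T i j e := fun i j => by
    simp only [T]
    rw [← Finset.sum_div, ← Finset.mul_sum, hQ1, mul_div_cancel_right₀ _ (hg0 j)]
  have hQT : ∀ j e, Q j e = ∑ i, T i j e := fun j e => by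
    simp only [T]
    rw [← Finset.sum_div, ← Finset.sum_mul, hP2, mul_div_cancel_left₀ _ (hg0 j)]
  refine le_trans (csInf_le ?_ ⟨fun i e => ∑ j, T i j e, ⟨?_, ?_, ?_⟩, rfl⟩) ?_
  · refine ⟨0, ?_⟩
    rintro _ ⟨R, ⟨hR, -, -⟩, rfl⟩
    refine Finset.sum_nonneg fun i _ => Finset.sum_nonneg fun j _ => Finset.sum_nonneg fun i' _ =>
      Finset.sum_nonneg fun j' _ => mul_nonneg (mul_nonneg (add_nonneg
        (mul_nonneg h1' dist_nonneg) (mul_nonneg h0 (abs_nonneg _))) (hR _ _)) (hR _ _)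
  · exact fun i e => Finset.sum_nonneg fun j _ => hT i j e
  · intro i
    rw [Finset.sum_comm, ← hP1 i]
    exact Finset.sum_congr rfl fun j _ => (hPT i j).symm
  · intro e
    rw [Finset.sum_comm, ← hQ2 e]
    exact Finset.sum_congr rfl fun j _ => (hQT j e).symm
  · refine glue_cost T hT
      (fun i j k' l => (1 - α) * dist (a i) (c j) + α * |C1 i k' - C3 j l|)
      (fun i j k' l => (1 - α) * dist (a i) (b j) + α * |C1 i k' - C2 j l|)
      (fun i j k' l => (1 - α) * dist (b i) (c j) + α * |C2 i k' - C3 j l|)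
      ?_ _ P Q (fun _ _ => rfl) hPT hQT
    intro i j e i' j' e'
    have e1 := mul_le_mul_of_nonneg_left (dist_triangle (a i) (b j) (c e)) h1'
    have e2 := mul_le_mul_of_nonneg_left (abs_sub_le (C1 i i') (C2 j j') (C3 e e')) h0
    linarith
end

section
/- (Relaxed triangle inequality for q > 1.) Let (Ω_f, d) be a metric space, q > 1 a real number and α ∈ [0,1]. Let h ∈ Σ_n, g ∈ Σ_m, f ∈ Σ_k be positive histograms with associated features a₁,…,a_n, b₁,…,b_m, c₁,…,c_k ∈ Ω_f and matrices C₁ ∈ ℝ^{n×n}, C₂ ∈ ℝ^{m×m}, C₃ ∈ ℝ^{k×k}. Write FGW_q(μ,ν) = min_{π ∈ Π(h,g)} Σ_{i,j,k',l} ((1−α)·d(a_i,b_j)^q + α·|C₁(i,k')−C₂(j,l)|^q)·π_{ij}·π_{k'l}, and define FGW_q(ν,γ) and FGW_q(μ,γ) analogously. Then FGW_q(μ,γ) ≤ 2^{q−1}·(FGW_q(μ,ν) + FGW_q(ν,γ)). -/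
open Finset

/-- The FGW value of order `q` between two structured data given by features,
structure matrices and histograms. -/
noncomputable def FGWq {Ωf : Type*} [MetricSpace Ωf] (q α : ℝ) {n m : ℕ}
    (a : Fin n → Ωf) (b : Fin m → Ωf)
    (C1 : Matrix (Fin n) (Fin n) ℝ) (C2 : Matrix (Fin m) (Fin m) ℝ)
    (h : Fin n → ℝ) (g : Fin m → ℝ) : ℝ :=
  sInf ((fun π : Matrix (Fin n) (Fin m) ℝ =>
    ∑ i, ∑ j, ∑ k', ∑ l,
      ((1 - α) * dist (a i) (b j) ^ q + α * |C1 i k' - C2 j l| ^ q) * π i j * π k' l) ''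
    Couplings h g)

lemma aux_pow {q x y z : ℝ} (hq : 1 < q) (hx : 0 ≤ x) (hy : 0 ≤ y) (hz : 0 ≤ z)
    (hle : z ≤ x + y) : z ^ q ≤ (2 : ℝ) ^ (q - 1) * (x ^ q + y ^ q) := by
  have h1 : z ^ q ≤ (x + y) ^ q := Real.rpow_le_rpow hz hle (by linarith)
  have h2 := NNReal.rpow_add_le_mul_rpow_add_rpow ⟨x, hx⟩ ⟨y, hy⟩ hq.le
  have h3 : (x + y) ^ q ≤ (2 : ℝ) ^ (q - 1) * (x ^ q + y ^ q) := by
    exact_mod_cast h2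
  exact h1.trans h3

lemma aux_coupling_nonempty {n m : ℕ} {h : Fin n → ℝ} {g : Fin m → ℝ}
    (hh : IsSimplex h) (hg : IsSimplex g) : (Couplings h g).Nonempty := by
  refine ⟨fun i j => h i * g j, fun i j => (mul_pos (hh.1 i) (hg.1 j)).le, fun i => ?_,
    fun j => ?_⟩
  · rw [← Finset.mul_sum, hg.2, mul_one]
  · rw [← Finset.sum_mul, hh.2, one_mul]

lemma aux_A {n m k : ℕ} (T : Fin n → Fin m → Fin k → ℝ) (G : Fin n → Fin k → ℝ) :
    ∑ i, ∑ e, G i e * (∑ j, T i j e) = ∑ i, ∑ j, ∑ e, G i e * T i j e := by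
  refine Finset.sum_congr rfl fun i _ => ?_
  rw [Finset.sum_comm]
  simp_rw [Finset.mul_sum]

lemma aux_B {n m k : ℕ} (T : Fin n → Fin m → Fin k → ℝ) (G : Fin n → Fin m → ℝ) :
    ∑ i, ∑ j, G i j * (∑ e, T i j e) = ∑ i, ∑ j, ∑ e, G i j * T i j e := by
  simp_rw [Finset.mul_sum]

lemma aux_C {n m k : ℕ} (T : Fin n → Fin m → Fin k → ℝ) (G : Fin m → Fin k → ℝ) :
    ∑ j, ∑ e, G j e * (∑ i, T i j e) = ∑ i, ∑ j, ∑ e, G j e * T i j e := by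
  simp_rw [Finset.mul_sum]
  conv_rhs => rw [Finset.sum_comm]
  refine Finset.sum_congr rfl fun j _ => ?_
  rw [Finset.sum_comm]

lemma aux_S {n m : ℕ} (L : Fin n → Fin m → Fin n → Fin m → ℝ) (p : Fin n → Fin m → ℝ) :
    ∑ i, ∑ j, ∑ i', ∑ j', L i j i' j' * p i j * p i' j' =
    ∑ i, ∑ j, (∑ i', ∑ j', L i j i' j' * p i' j') * p i j := by
  refine Finset.sum_congr rfl fun i _ => Finset.sum_congr rfl fun j _ => ?_
  simp_rw [Finset.sum_mul]
  refine Finset.sum_congr rfl fun i' _ => Finset.sum_congr rfl fun j' _ => ?_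
  ring

lemma aux_main {n m k : ℕ} (K : ℝ) (T : Fin n → Fin m → Fin k → ℝ)
    (hT : ∀ i j e, 0 ≤ T i j e)
    (L1 : Fin n → Fin m → Fin n → Fin m → ℝ) (L2 : Fin m → Fin k → Fin m → Fin k → ℝ)
    (L3 : Fin n → Fin k → Fin n → Fin k → ℝ)
    (hL : ∀ i j e i' j' e', L3 i e i' e' ≤ K * (L1 i j i' j' + L2 j e j' e')) 
    (p : Fin n → Fin m → ℝ) (r : Fin m → Fin k → ℝ) (s : Fin n → Fin k → ℝ)
    (hp : ∀ i j, p i j = ∑ e, T i j e) (hr : ∀ j e, r j e = ∑ i, T i j e)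
    (hs : ∀ i e, s i e = ∑ j, T i j e) :
    ∑ i, ∑ j, ∑ i', ∑ j', L3 i j i' j' * s i j * s i' j' ≤
    K * (∑ i, ∑ j, ∑ i', ∑ j', L1 i j i' j' * p i j * p i' j' +
      ∑ i, ∑ j, ∑ i', ∑ j', L2 i j i' j' * r i j * r i' j') := by
  rw [aux_S, aux_S, aux_S]
  simp_rw [hp, hr, hs, aux_A T, aux_B T, aux_C T]
  simp_rw [← Finset.sum_add_distrib, Finset.mul_sum]
  refine Finset.sum_le_sum fun i _ => Finset.sum_le_sum fun j _ => Finset.sum_le_sum fun e _ => ?_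
  rw [← add_mul, ← mul_assoc]
  refine mul_le_mul_of_nonneg_right ?_ (hT _ _ _)
  simp_rw [← Finset.sum_add_distrib, Finset.mul_sum]
  refine Finset.sum_le_sum fun i' _ => Finset.sum_le_sum fun j' _ =>
    Finset.sum_le_sum fun e' _ => ?_
  rw [← add_mul, ← mul_assoc]
  exact mul_le_mul_of_nonneg_right (hL _ _ _ _ _ _) (hT _ _ _)

/-- relaxed triangle inequality for `q > 1`:
`FGW_q(μ,γ) ≤ 2^{q-1} (FGW_q(μ,ν) + FGW_q(ν,γ))`. -/
theorem fgw_relaxed_triangle_inequality {Ωf : Type*} [MetricSpace Ωf] {n m k : ℕ}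
    (q α : ℝ) (hq : 1 < q) (hα : α ∈ Set.Icc (0 : ℝ) 1)
    (h : Fin n → ℝ) (g : Fin m → ℝ) (f : Fin k → ℝ)
    (hh : IsSimplex h) (hg : IsSimplex g) (hf : IsSimplex f)
    (a : Fin n → Ωf) (b : Fin m → Ωf) (c : Fin k → Ωf)
    (C1 : Matrix (Fin n) (Fin n) ℝ) (C2 : Matrix (Fin m) (Fin m) ℝ)
    (C3 : Matrix (Fin k) (Fin k) ℝ) :
    FGWq q α a c C1 C3 h f ≤
      (2 : ℝ) ^ (q - 1) * (FGWq q α a b C1 C2 h g + FGWq q α b c C2 C3 g f) := by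
  obtain ⟨hα0, hα1⟩ := hα
  have hα1' : 0 ≤ 1 - α := by linarith
  have hK : (0 : ℝ) < (2 : ℝ) ^ (q - 1) := by positivity
  have key : ∀ p ∈ Couplings h g, ∀ r ∈ Couplings g f, FGWq q α a c C1 C3 h f ≤
      (2 : ℝ) ^ (q - 1) * ((∑ i, ∑ j, ∑ k', ∑ l,
      ((1 - α) * dist (a i) (b j) ^ q + α * |C1 i k' - C2 j l| ^ q) * p i j * p k' l) +
      (∑ i, ∑ j, ∑ k', ∑ l,
      ((1 - α) * dist (b i) (c j) ^ q + α * |C2 i k' - C3 j l| ^ q) * r i j * r k' l)) := by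
    rintro p ⟨hp0, hp1, hp2⟩ r ⟨hr0, hr1, hr2⟩
    have hT : ∀ i j e, 0 ≤ p i j * r j e / g j := fun i j e =>
      div_nonneg (mul_nonneg (hp0 i j) (hr0 j e)) (hg.1 j).le
    have hTp : ∀ i j, p i j = ∑ e, p i j * r j e / g j := by
      intro i j
      rw [← Finset.sum_div, ← Finset.mul_sum, hr1, mul_div_cancel_right₀ _ (hg.1 j).ne']
    have hTr : ∀ j e, r j e = ∑ i, p i j * r j e / g j := by
      intro j e
      rw [← Finset.sum_div, ← Finset.sum_mul, hp2, mul_div_cancel_left₀ _ (hg.1 j).ne']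
    refine le_trans (csInf_le ?_ ⟨fun i e => ∑ j, p i j * r j e / g j, ⟨?_, ?_, ?_⟩, rfl⟩) ?_
    · refine ⟨0, ?_⟩
      rintro _ ⟨s, ⟨hs0, -, -⟩, rfl⟩
      refine Finset.sum_nonneg fun i _ => Finset.sum_nonneg fun j _ =>
        Finset.sum_nonneg fun i' _ => Finset.sum_nonneg fun j' _ => ?_
      have := hs0 i j
      have := hs0 i' j'
      positivity
    · exact fun i e => Finset.sum_nonneg fun j _ => hT i j e
    · intro i
      rw [Finset.sum_comm, ← hp1 i]
      exact Finset.sum_congr rfl fun j _ => (hTp i j).symm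
    · intro e
      rw [Finset.sum_comm, ← hr2 e]
      exact Finset.sum_congr rfl fun j _ => (hTr j e).symm
    · refine aux_main _ (fun i j e => p i j * r j e / g j) hT
        (fun i j k' l => (1 - α) * dist (a i) (b j) ^ q + α * |C1 i k' - C2 j l| ^ q)
        (fun i j k' l => (1 - α) * dist (b i) (c j) ^ q + α * |C2 i k' - C3 j l| ^ q)
        (fun i j k' l => (1 - α) * dist (a i) (c j) ^ q + α * |C1 i k' - C3 j l| ^ q)
        ?_ p r (fun i e => ∑ j, p i j * r j e / g j) hTp hTr (fun _ _ => rfl)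
      intro i j e i' j' e'
      have h1 := aux_pow hq dist_nonneg dist_nonneg dist_nonneg
        (dist_triangle (a i) (b j) (c e))
      have h2 := aux_pow hq (abs_nonneg _) (abs_nonneg _) (abs_nonneg _)
        (abs_sub_le (C1 i i') (C2 j j') (C3 e e'))
      have h3 := mul_le_mul_of_nonneg_left h1 hα1'
      have h4 := mul_le_mul_of_nonneg_left h2 hα0
      linarith
  have h2 : ∀ p ∈ Couplings h g, FGWq q α a c C1 C3 h f / (2 : ℝ) ^ (q - 1) -
      (∑ i, ∑ j, ∑ k', ∑ l,
      ((1 - α) * dist (a i) (b j) ^ q + α * |C1 i k' - C2 j l| ^ q) * p i j * p k' l) ≤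
      FGWq q α b c C2 C3 g f := by
    intro p hp
    refine le_csInf ((aux_coupling_nonempty hg hf).image _) ?_
    rintro _ ⟨r, hr, rfl⟩
    rw [sub_le_iff_le_add', div_le_iff₀' hK]
    exact key p hp r hr
  have h3 : FGWq q α a c C1 C3 h f / (2 : ℝ) ^ (q - 1) - FGWq q α b c C2 C3 g f ≤
      FGWq q α a b C1 C2 h g := by
    refine le_csInf ((aux_coupling_nonempty hh hg).image _) ?_
    rintro _ ⟨p, hp, rfl⟩
    have := h2 p hp
    dsimp only
    linarith
  rw [← div_le_iff₀' hK]
  linarith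
end

section
/- (Mixed-structure comparison bound.) Let (Ω_f, d) be a metric space, h ∈ Σ_n, g ∈ Σ_m positive histograms, a₁,…,a_n ∈ Ω_f, b₁,…,b_m ∈ Ω_f, and C₁ ∈ ℝ^{n×n}, C₂ ∈ ℝ^{m×m}. Define Ĉ₁(i,k) = ½·C₁(i,k) + ½·d(a_i,a_k) and Ĉ₂(j,l) = ½·C₂(j,l) + ½·d(b_j,b_l). Then for every natural number n₀ ≥ 1 and every π ∈ Π(h,g): J_{n₀}(Ĉ₁,Ĉ₂,π) ≤ ½·J_{n₀}(C₁,C₂,π) + M_{n₀}(π), where J_{n₀}(C₁,C₂,π) = Σ_{i,j,k,l} |C₁(i,k)−C₂(j,l)|^{n₀}·π_{ij}·π_{kl} and M_{n₀}(π) = ½·Σ_{i,j,k,l} (d(a_i,b_j) + d(a_k,b_l))^{n₀}·π_{ij}·π_{kl}. -/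
open Finset

/-- mixed-structure comparison bound: with
`Ĉ₁(i,k) = ½C₁(i,k) + ½d(aᵢ,aₖ)` and `Ĉ₂(j,l) = ½C₂(j,l) + ½d(bⱼ,bₗ)`, for every
`n₀ ≥ 1` and every admissible coupling `π`,
`J_{n₀}(Ĉ₁,Ĉ₂,π) ≤ ½ J_{n₀}(C₁,C₂,π) + M_{n₀}(π)`. -/
theorem mixed_structure_bound {Ωf : Type*} [MetricSpace Ωf] {n m : ℕ}
    (h : Fin n → ℝ) (g : Fin m → ℝ) (hh : IsSimplex h) (hg : IsSimplex g)
    (a : Fin n → Ωf) (b : Fin m → Ωf)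
    (C1 : Matrix (Fin n) (Fin n) ℝ) (C2 : Matrix (Fin m) (Fin m) ℝ)
    (n₀ : ℕ) (hn₀ : 1 ≤ n₀)
    (π : Matrix (Fin n) (Fin m) ℝ) (hπ : π ∈ Couplings h g) :
    (∑ i, ∑ j, ∑ k, ∑ l,
        |((1 / 2 : ℝ) * C1 i k + (1 / 2) * dist (a i) (a k)) -
          ((1 / 2 : ℝ) * C2 j l + (1 / 2) * dist (b j) (b l))| ^ n₀ * π i j * π k l) ≤
      (1 / 2 : ℝ) *
        (∑ i, ∑ j, ∑ k, ∑ l, |C1 i k - C2 j l| ^ n₀ * π i j * π k l) +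
      (1 / 2 : ℝ) *
        (∑ i, ∑ j, ∑ k, ∑ l,
          (dist (a i) (b j) + dist (a k) (b l)) ^ n₀ * π i j * π k l) := by
  have key : ∀ i j k l, |((1 / 2 : ℝ) * C1 i k + (1 / 2) * dist (a i) (a k)) -
          ((1 / 2 : ℝ) * C2 j l + (1 / 2) * dist (b j) (b l))| ^ n₀ * π i j * π k l ≤
      (1 / 2 : ℝ) * (|C1 i k - C2 j l| ^ n₀ * π i j * π k l) +
      (1 / 2 : ℝ) * ((dist (a i) (b j) + dist (a k) (b l)) ^ n₀ * π i j * π k l) := by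
    intro i j k l
    have hd : |dist (a i) (a k) - dist (b j) (b l)| ≤ dist (a i) (b j) + dist (a k) (b l) :=
      dist_dist_dist_le (a i) (a k) (b j) (b l)
    have h1 : |((1 / 2 : ℝ) * C1 i k + (1 / 2) * dist (a i) (a k)) -
          ((1 / 2 : ℝ) * C2 j l + (1 / 2) * dist (b j) (b l))| ≤
        (1 / 2 : ℝ) * |C1 i k - C2 j l| + (1 / 2) * (dist (a i) (b j) + dist (a k) (b l)) := by
      rw [abs_le] at hd
      have h2 := le_abs_self (C1 i k - C2 j l)
      have h3 := neg_abs_le (C1 i k - C2 j l)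
      rw [abs_le]
      constructor <;> linarith [hd.1, hd.2]
    have hx : |C1 i k - C2 j l| ∈ Set.Ici (0 : ℝ) := Set.mem_Ici.2 (abs_nonneg _)
    have hy : dist (a i) (b j) + dist (a k) (b l) ∈ Set.Ici (0 : ℝ) :=
      Set.mem_Ici.2 (add_nonneg dist_nonneg dist_nonneg)
    have hc := (convexOn_pow (𝕜 := ℝ) n₀).2 hx hy
      (by norm_num : (0 : ℝ) ≤ 1 / 2) (by norm_num : (0 : ℝ) ≤ 1 / 2) (by norm_num)
    simp only [smul_eq_mul] at hc
    have h4 := (pow_le_pow_left₀ (abs_nonneg _) h1 n₀).trans hc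
    have h5 := mul_le_mul_of_nonneg_right h4 (mul_nonneg (hπ.1 i j) (hπ.1 k l))
    linarith
  simp only [Finset.mul_sum, ← Finset.sum_add_distrib]
  exact Finset.sum_le_sum fun i _ => Finset.sum_le_sum fun j _ =>
    Finset.sum_le_sum fun k _ => Finset.sum_le_sum fun l _ => key i j k l
end

section
/- (Quadratic simplification of the Gromov term for q = 2.) Let h ∈ Σ_n, g ∈ Σ_m be positive histograms, C₁ ∈ ℝ^{n×n} and C₂ ∈ ℝ^{m×m} real matrices, and π ∈ Π(h,g). Then Σ_{i,j,k,l} (C₁(i,k) − C₂(j,l))²·π_{ij}·π_{kl} = Σ_{i,k} C₁(i,k)²·h_i·h_k + Σ_{j,l} C₂(j,l)²·g_j·g_l − 2·Σ_{i,j,k,l} C₁(i,k)·C₂(j,l)·π_{ij}·π_{kl}; in matrix form the last term equals 2·⟨C₁ π C₂ᵀ, π⟩, so the quartic tensor contraction reduces to a quantity computable in O(n²m + nm²) operations. -/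
open Finset

/-- quadratic simplification of the Gromov term for `q = 2`:
the quartic tensor contraction decomposes into marginal terms plus a cross term
which equals the Frobenius inner product `⟨C₁ π C₂ᵀ, π⟩`. -/
theorem gromov_term_quadratic_simplification {n m : ℕ}
    (h : Fin n → ℝ) (g : Fin m → ℝ) (hh : IsSimplex h) (hg : IsSimplex g)
    (C1 : Matrix (Fin n) (Fin n) ℝ) (C2 : Matrix (Fin m) (Fin m) ℝ)
    (π : Matrix (Fin n) (Fin m) ℝ) (hπ : π ∈ Couplings h g) :
    (∑ i, ∑ j, ∑ k, ∑ l, (C1 i k - C2 j l) ^ 2 * π i j * π k l =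
      (∑ i, ∑ k, C1 i k ^ 2 * h i * h k) + (∑ j, ∑ l, C2 j l ^ 2 * g j * g l) -
        2 * ∑ i, ∑ j, ∑ k, ∑ l, C1 i k * C2 j l * π i j * π k l) ∧
    (∑ i, ∑ j, ∑ k, ∑ l, C1 i k * C2 j l * π i j * π k l =
      ∑ i, ∑ j, (C1 * π * C2.transpose) i j * π i j) := by
  obtain ⟨-, h1, h2⟩ := hπ
  have A : ∑ i, ∑ j, ∑ k, ∑ l, C1 i k ^ 2 * π i j * π k l = ∑ i, ∑ k, C1 i k ^ 2 * h i * h k := by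
    refine Finset.sum_congr rfl fun i _ => ?_
    rw [Finset.sum_comm]
    refine Finset.sum_congr rfl fun k _ => ?_
    simp_rw [← Finset.mul_sum, h1, ← Finset.sum_mul, ← Finset.mul_sum, h1]
  have B : ∑ i, ∑ j, ∑ k, ∑ l, C2 j l ^ 2 * π i j * π k l = ∑ j, ∑ l, C2 j l ^ 2 * g j * g l := by
    rw [Finset.sum_comm]
    refine Finset.sum_congr rfl fun j _ => ?_
    have e : ∀ i, ∑ k, ∑ l, C2 j l ^ 2 * π i j * π k l = ∑ l, C2 j l ^ 2 * π i j * g l := by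
      intro i
      rw [Finset.sum_comm]
      refine Finset.sum_congr rfl fun l _ => ?_
      rw [← Finset.mul_sum, h2]
    simp_rw [e]
    rw [Finset.sum_comm]
    refine Finset.sum_congr rfl fun l _ => ?_
    rw [← Finset.sum_mul, ← Finset.mul_sum, h2]
  constructor
  · rw [← A, ← B]
    simp_rw [Finset.mul_sum, ← Finset.sum_add_distrib, ← Finset.sum_sub_distrib]
    refine Finset.sum_congr rfl fun i _ => Finset.sum_congr rfl fun j _ =>
      Finset.sum_congr rfl fun k _ => Finset.sum_congr rfl fun l _ => ?_
    ring
  · refine Finset.sum_congr rfl fun i _ => Finset.sum_congr rfl fun j _ => ?_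
    simp only [Matrix.mul_apply, Matrix.transpose_apply, Finset.sum_mul]
    rw [Finset.sum_comm]
    refine Finset.sum_congr rfl fun k _ => Finset.sum_congr rfl fun l _ => ?_
    ring
end
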